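/- Let 0 ≤ b' < 1/2 and 0 ≤ b ≤ 1 with b + b' ≤ 1, let A > 0 and a ≥ 0. Let K_a : ℝ² → ℂ be measurable and satisfy |K_a(λ,μ)| ≤ (A/⟨a+iμ⟩) · min( 1/⟨λ⟩ + 1/⟨λ−μ⟩ , ⟨a⟩/⟨λ⟩² + ⟨a⟩/⟨λ−μ⟩² ) for all (λ,μ) ∈ ℝ². Then there is a constant C = C(b,b') > 0, independent of a and A, such that for every measurable g : ℝ → ℂ with ‖⟨μ⟩^{−b'} g(μ)‖_{L²_μ} < ∞, one has ‖⟨λ⟩^{b} ∫_ℝ K_a(λ,μ) g(μ) dμ‖_{L²_λ} ≤ C · A · ⟨a⟩ · ‖⟨μ⟩^{−b'} g(μ)‖_{L²_μ}. -/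

import Mathlib

/-!
Only the second entry of the minimum and the inequality `⟨a + iμ⟩ ≥ ⟨μ⟩` are needed. With
`G(μ) = ⟨μ⟩^{-b'} |g(μ)|`, the weighted kernel `⟨λ⟩^b |K(λ,μ)| ⟨μ⟩^{b'}` is at most
`A ⟨a⟩ ⟨λ⟩^b ⟨μ⟩^{b'-1} (⟨λ⟩⁻² + ⟨λ-μ⟩⁻²)`. Since `⟨λ⟩^b ≤ ⟨μ⟩^b + ⟨λ-μ⟩^b` and `b + b' ≤ 1`, this
is bounded by `A ⟨a⟩ p q`, where
`p = ⟨μ⟩^{b'-1} + ⟨λ-μ⟩⁻¹` and `q = ⟨λ⟩⁻¹ + ⟨λ-μ⟩⁻¹` (`weight_le`).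
Here `∫ p² dμ` is bounded uniformly in `λ` because `b' < 1/2`, and `∫ q² dλ` is bounded uniformly
in `μ`, so the Schur test in the form `schur_test` (Cauchy–Schwarz in `μ`, then Tonelli) gives the
`L²` bound.
-/

noncomputable section

open MeasureTheory
open scoped ENNReal

/-- Japanese bracket of a real number: `⟨x⟩ = (1 + x²)^{1/2}`. -/
def jb (x : ℝ) : ℝ := Real.sqrt (1 + x ^ 2)

/-- `⟨a + iμ⟩ = (1 + a² + μ²)^{1/2}`. -/
def jbC (a μ : ℝ) : ℝ := Real.sqrt (1 + a ^ 2 + μ ^ 2)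

/-- The kernel bound hypothesis of Lemma 3.5:
`|K_a(λ,μ)| ≤ (A/⟨a+iμ⟩) min( ⟨λ⟩⁻¹ + ⟨λ-μ⟩⁻¹ , ⟨a⟩⟨λ⟩⁻² + ⟨a⟩⟨λ-μ⟩⁻² )`. -/
def KernelBound (A a : ℝ) (K : ℝ → ℝ → ℂ) : Prop :=
  ∀ l μ : ℝ, ‖K l μ‖ ≤ A / jbC a μ *
    min (1 / jb l + 1 / jb (l - μ)) (jb a / jb l ^ 2 + jb a / jb (l - μ) ^ 2)

/-- Schur test for a factored kernel `p q`: if `∫ p(l,·)² ≤ P` for all `l` and `∫ q(·,m)² ≤ Q` for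
all `m`, the operator with kernel `p q` has squared `L²` norm at most `P Q`. -/
lemma schur_test (p q : ℝ → ℝ → ℝ≥0∞) (hp : Measurable (Function.uncurry p))
    (hq : Measurable (Function.uncurry q)) (P Q : ℝ≥0∞)
    (hP : ∀ l, ∫⁻ m, p l m ^ 2 ≤ P) (hQ : ∀ m, ∫⁻ l, q l m ^ 2 ≤ Q)
    (G : ℝ → ℝ≥0∞) (hG : Measurable G) :
    ∫⁻ l, (∫⁻ m, p l m * (q l m * G m)) ^ 2 ≤ P * Q * ∫⁻ m, G m ^ 2 := by
  have cs : ∀ l, (∫⁻ m, p l m * (q l m * G m)) ^ 2 ≤ P * ∫⁻ m, (q l m * G m) ^ 2 := by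
    intro l
    have hpl : Measurable (p l) := hp.of_uncurry_left
    have hql : Measurable (q l) := hq.of_uncurry_left
    have h := ENNReal.lintegral_mul_le_Lp_mul_Lq volume Real.HolderConjugate.two_two
      hpl.aemeasurable (hql.mul hG).aemeasurable
    simp only [Pi.mul_apply, ENNReal.rpow_two] at h
    calc _ ≤ ((∫⁻ m, p l m ^ 2) ^ ((1 : ℝ) / 2) *
          (∫⁻ m, (q l m * G m) ^ 2) ^ ((1 : ℝ) / 2)) ^ 2 := by gcongr
      _ = (∫⁻ m, p l m ^ 2) * ∫⁻ m, (q l m * G m) ^ 2 := by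
        rw [mul_pow, ← ENNReal.rpow_two, ← ENNReal.rpow_two, ← ENNReal.rpow_mul,
          ← ENNReal.rpow_mul]
        norm_num
      _ ≤ _ := by gcongr; exact hP l
  have hm : Measurable (Function.uncurry fun l m => (q l m * G m) ^ 2) := by
    have : Measurable fun z : ℝ × ℝ => (Function.uncurry q z * G z.2) ^ 2 := by fun_prop
    exact this
  calc _ ≤ ∫⁻ l, P * ∫⁻ m, (q l m * G m) ^ 2 := lintegral_mono cs
    _ = P * ∫⁻ l, ∫⁻ m, (q l m * G m) ^ 2 := lintegral_const_mul _ hm.lintegral_prod_right'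
    _ = P * ∫⁻ m, ∫⁻ l, (q l m * G m) ^ 2 := by rw [lintegral_lintegral_swap hm.aemeasurable]
    _ = P * ∫⁻ m, (∫⁻ l, q l m ^ 2) * G m ^ 2 := by
      congr 1
      refine lintegral_congr fun m => ?_
      have hqm : Measurable fun l => q l m := hq.of_uncurry_right
      simp_rw [mul_pow]
      exact lintegral_mul_const _ (hqm.pow_const 2)
    _ ≤ P * ∫⁻ m, Q * G m ^ 2 := by
      gcongr with m
      exact hQ m
    _ = _ := by rw [lintegral_const_mul _ (hG.pow_const 2), mul_assoc]

lemma one_le_jb (x : ℝ) : 1 ≤ jb x := Real.one_le_sqrt.2 (by nlinarith [sq_nonneg x])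

lemma jb_pos (x : ℝ) : 0 < jb x := one_pos.trans_le (one_le_jb x)

lemma jb_sq (x : ℝ) : jb x ^ 2 = 1 + x ^ 2 := Real.sq_sqrt (by positivity)

lemma jb_le_add (l m : ℝ) : jb l ≤ jb m + jb (l - m) := by
  have h1 := jb_pos m
  have h2 := jb_pos (l - m)
  refine Real.sqrt_le_iff.2 ⟨by positivity, ?_⟩
  have h : m * (l - m) ≤ jb m * jb (l - m) := by
    refine le_of_sq_le_sq ?_ (by positivity)
    rw [mul_pow, mul_pow, jb_sq, jb_sq]
    nlinarith [sq_nonneg m, sq_nonneg (l - m)]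
  nlinarith [jb_sq m, jb_sq (l - m)]

lemma jb_le_jbC (a m : ℝ) : jb m ≤ jbC a m :=
  Real.sqrt_le_sqrt (by nlinarith [sq_nonneg a])

@[fun_prop]
lemma continuous_jb : Continuous jb := by unfold jb; fun_prop

/-- The weighted model kernel is dominated by the product of the two Schur factors; `x`, `y`, `m`
stand for `⟨λ⟩`, `⟨λ-μ⟩`, `⟨μ⟩`. -/
lemma weight_le {b b' x y m : ℝ} (hb0 : 0 ≤ b) (hb1 : b ≤ 1) (hbb' : b + b' ≤ 1)
    (hx : 1 ≤ x) (hy : 1 ≤ y) (hm : 1 ≤ m) (hxy : x ≤ m + y) :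
    x ^ b * m ^ (b' - 1) * (1 / x ^ 2 + 1 / y ^ 2) ≤
      (m ^ (b' - 1) + y⁻¹) * (x⁻¹ + y⁻¹) := by
  have x0 : 0 < x := by linarith
  have y0 : 0 < y := by linarith
  have m0 : 0 < m := by linarith
  have hxb : x ^ b ≤ x := by simpa using Real.rpow_le_rpow_of_exponent_le hx hb1
  have hyb : y ^ b ≤ y := by simpa using Real.rpow_le_rpow_of_exponent_le hy hb1
  have hadd : x ^ b ≤ m ^ b + y ^ b :=
    (Real.rpow_le_rpow x0.le hxy hb0).trans (Real.rpow_add_le_add_rpow m0.le y0.le hb0 hb1)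
  have hmb : m ^ b * m ^ (b' - 1) ≤ 1 := by
    rw [← Real.rpow_add m0]
    exact Real.rpow_le_one_of_one_le_of_nonpos hm (by linarith)
  have hM : 0 < m ^ (b' - 1) := by positivity
  generalize m ^ (b' - 1) = M at *
  have t1 : x ^ b * M * (1 / x ^ 2) ≤ M * x⁻¹ := by
    calc x ^ b * M * (1 / x ^ 2) ≤ x * M * (1 / x ^ 2) := by gcongr
      _ = _ := by field_simp
  have t2 : x ^ b * M * (1 / y ^ 2) ≤ y⁻¹ * y⁻¹ + M * y⁻¹ := by
    calc x ^ b * M * (1 / y ^ 2) ≤ (1 + y * M) * (1 / y ^ 2) := by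
          gcongr
          calc x ^ b * M ≤ (m ^ b + y ^ b) * M := by gcongr
            _ = m ^ b * M + y ^ b * M := by ring
            _ ≤ 1 + y * M := by gcongr
      _ = _ := by field_simp
  have : 0 < y⁻¹ * x⁻¹ := by positivity
  nlinarith

/-- `∫ ⟨x⟩^{2s} dx < ∞` for `s < -1/2`. -/
lemma lintegral_jb_rpow_lt_top {s : ℝ} (hs : s < -1 / 2) :
    ∫⁻ x : ℝ, ENNReal.ofReal (jb x ^ s) ^ 2 < ⊤ := by
  have h := integrable_rpow_neg_one_add_norm_sq (E := ℝ) (μ := volume) (r := -(2 * s))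
    (by simp; linarith)
  refine lt_of_eq_of_lt (lintegral_congr fun x => ?_) h.lintegral_lt_top
  have h1 := jb_pos x
  rw [← ENNReal.ofReal_pow (by positivity)]
  congr 1
  rw [Real.norm_eq_abs, sq_abs, ← jb_sq, ← Real.rpow_natCast, ← Real.rpow_natCast,
    ← Real.rpow_mul h1.le, ← Real.rpow_mul h1.le]
  congr 1
  push_cast
  ring

lemma lintegral_jb_inv_lt_top : ∫⁻ x : ℝ, ENNReal.ofReal (jb x)⁻¹ ^ 2 < ⊤ := by
  simpa only [Real.rpow_neg_one] using lintegral_jb_rpow_lt_top (s := -1) (by norm_num)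

lemma lintegral_add_sq_le {u v : ℝ → ℝ≥0∞} (hu : Measurable u) :
    ∫⁻ x, (u x + v x) ^ 2 ≤ 2 * ((∫⁻ x, u x ^ 2) + ∫⁻ x, v x ^ 2) := by
  rw [← lintegral_add_left (hu.pow_const 2), ← lintegral_const_mul' _ _ (by simp)]
  refine lintegral_mono fun x => ?_
  have := ENNReal.rpow_add_le_mul_rpow_add_rpow (u x) (v x) (p := 2) (by norm_num)
  simp only [ENNReal.rpow_two] at this
  norm_num at this
  exact this

/-- Lemma 3.5 (iii): under the kernel bound, `T_a` maps `H^{-b'}(ℝ)` to `H^{b}(ℝ)` with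
operator norm `≲ A ⟨a⟩`, for `0 ≤ b' < 1/2`, `0 ≤ b ≤ 1`, `b + b' ≤ 1`,
uniformly in `a ≥ 0` and `A`. -/
theorem kernel_bound_iii (b b' : ℝ) (hb'0 : 0 ≤ b') (hb' : b' < 1 / 2)
    (hb0 : 0 ≤ b) (hb1 : b ≤ 1) (hbb' : b + b' ≤ 1) :
    ∃ C > (0 : ℝ), ∀ A : ℝ, 0 < A → ∀ a : ℝ, 0 ≤ a →
      ∀ K : ℝ → ℝ → ℂ, Measurable (Function.uncurry K) → KernelBound A a K →
      ∀ g : ℝ → ℂ, Measurable g →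
        (∫⁻ μ : ℝ, ENNReal.ofReal ((jb μ ^ (-b') * ‖g μ‖) ^ 2)) < ⊤ →
        (∫⁻ l : ℝ, ENNReal.ofReal ((jb l ^ b * ‖∫ μ : ℝ, K l μ * g μ‖) ^ 2)) ^ ((1 : ℝ) / 2)
          ≤ ENNReal.ofReal (C * A * jb a) *
            (∫⁻ μ : ℝ, ENNReal.ofReal ((jb μ ^ (-b') * ‖g μ‖) ^ 2)) ^ ((1 : ℝ) / 2) := by
  set p : ℝ → ℝ → ℝ≥0∞ := fun l m =>
    ENNReal.ofReal (jb m ^ (b' - 1)) + ENNReal.ofReal (jb (l - m))⁻¹ with hp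
  set q : ℝ → ℝ → ℝ≥0∞ := fun l m =>
    ENNReal.ofReal (jb l)⁻¹ + ENNReal.ofReal (jb (l - m))⁻¹ with hq
  set I : ℝ≥0∞ := ∫⁻ x : ℝ, ENNReal.ofReal (jb x)⁻¹ ^ 2 with hI
  set J : ℝ≥0∞ := ∫⁻ x : ℝ, ENNReal.ofReal (jb x ^ (b' - 1)) ^ 2 with hJ
  have hItop : I < ⊤ := lintegral_jb_inv_lt_top
  have hJtop : J < ⊤ := lintegral_jb_rpow_lt_top (by linarith)
  have mjb : Measurable jb := continuous_jb.measurable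
  have hpm : Measurable (Function.uncurry p) := by
    simp only [hp, Function.uncurry_def]
    fun_prop
  have hqm : Measurable (Function.uncurry q) := by
    simp only [hq, Function.uncurry_def]
    fun_prop
  have hP : ∀ l, ∫⁻ m, p l m ^ 2 ≤ 2 * (J + I) := by
    intro l
    refine (lintegral_add_sq_le (by fun_prop)).trans_eq ?_
    rw [lintegral_sub_left_eq_self (fun x => ENNReal.ofReal (jb x)⁻¹ ^ 2) l]
  have hQ : ∀ m, ∫⁻ l, q l m ^ 2 ≤ 2 * (I + I) := by
    intro m
    refine (lintegral_add_sq_le (by fun_prop)).trans_eq ?_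
    rw [lintegral_sub_right_eq_self (fun x => ENNReal.ofReal (jb x)⁻¹ ^ 2) m]
  set R : ℝ≥0∞ := 2 * (J + I) * (2 * (I + I)) with hR
  have hRtop : R ^ ((1 : ℝ) / 2) ≠ ⊤ := by
    refine ENNReal.rpow_ne_top_of_nonneg (by norm_num) ?_
    have h1 := hItop.ne
    have h2 := hJtop.ne
    finiteness
  refine ⟨(R ^ ((1 : ℝ) / 2)).toReal + 1, by positivity, ?_⟩
  intro A hA a ha K _ hK g hg _
  set D : ℝ := A * jb a with hD
  have hD0 : 0 < D := mul_pos hA (jb_pos a)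
  set G : ℝ → ℝ≥0∞ := fun m => ENNReal.ofReal (jb m ^ (-b') * ‖g m‖) with hG
  have hGm : Measurable G := by fun_prop
  have hGsq : ∫⁻ m, ENNReal.ofReal ((jb m ^ (-b') * ‖g m‖) ^ 2) = ∫⁻ m, G m ^ 2 := by
    refine lintegral_congr fun m => ENNReal.ofReal_pow ?_ 2
    have := jb_pos m
    positivity
  have hker : ∀ l m, jb l ^ b * ‖K l m * g m‖ ≤
      D * ((jb m ^ (b' - 1) + (jb (l - m))⁻¹) * (((jb l)⁻¹ + (jb (l - m))⁻¹) *
        (jb m ^ (-b') * ‖g m‖))) := by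
    intro l m
    have hx := jb_pos l
    have hy := jb_pos (l - m)
    have hm := jb_pos m
    have ha := jb_pos a
    have h1 : ‖K l m‖ ≤ A / jb m * (jb a / jb l ^ 2 + jb a / jb (l - m) ^ 2) := by
      refine (hK l m).trans ?_
      gcongr
      · exact jb_le_jbC a m
      · exact min_le_right _ _
    have h2 := weight_le hb0 hb1 hbb' (one_le_jb l) (one_le_jb (l - m)) (one_le_jb m)
      (jb_le_add l m)
    have h3 : jb m ^ (b' - 1) * jb m ^ (-b') = (jb m)⁻¹ := by
      rw [← Real.rpow_add hm, ← Real.rpow_neg_one]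
      congr 1
      ring
    calc jb l ^ b * ‖K l m * g m‖
        ≤ jb l ^ b * (A / jb m * (jb a / jb l ^ 2 + jb a / jb (l - m) ^ 2) * ‖g m‖) := by
          rw [norm_mul]
          gcongr
      _ = D * ((jb l ^ b * (jb m)⁻¹ * (1 / jb l ^ 2 + 1 / jb (l - m) ^ 2)) * ‖g m‖) := by
          rw [hD]
          ring
      _ = D * ((jb l ^ b * jb m ^ (b' - 1) * (1 / jb l ^ 2 + 1 / jb (l - m) ^ 2)) *
            (jb m ^ (-b') * ‖g m‖)) := by
          rw [← h3]
          ring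
      _ ≤ D * (((jb m ^ (b' - 1) + (jb (l - m))⁻¹) * ((jb l)⁻¹ + (jb (l - m))⁻¹)) *
            (jb m ^ (-b') * ‖g m‖)) := by gcongr
      _ = _ := by ring
  have hker' : ∀ l m, ENNReal.ofReal (jb l ^ b) * ‖K l m * g m‖ₑ ≤
      ENNReal.ofReal D * (p l m * (q l m * G m)) := by
    intro l m
    have hx := jb_pos l
    have hy := jb_pos (l - m)
    have hm := jb_pos m
    rw [← ofReal_norm, ← ENNReal.ofReal_mul (by positivity)]
    simp only [hp, hq, hG]
    rw [← ENNReal.ofReal_add (by positivity) (by positivity),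
      ← ENNReal.ofReal_add (by positivity) (by positivity),
      ← ENNReal.ofReal_mul (by positivity), ← ENNReal.ofReal_mul (by positivity),
      ← ENNReal.ofReal_mul (by positivity)]
    exact ENNReal.ofReal_le_ofReal (hker l m)
  have hpt : ∀ l, ENNReal.ofReal ((jb l ^ b * ‖∫ m : ℝ, K l m * g m‖) ^ 2) ≤
      ENNReal.ofReal D ^ 2 * (∫⁻ m, p l m * (q l m * G m)) ^ 2 := by
    intro l
    have hx := jb_pos l
    rw [ENNReal.ofReal_pow (by positivity), ← mul_pow]
    gcongr
    rw [ENNReal.ofReal_mul (by positivity), ofReal_norm]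
    calc _ ≤ ENNReal.ofReal (jb l ^ b) * ∫⁻ m, ‖K l m * g m‖ₑ := by
          gcongr
          exact enorm_integral_le_lintegral_enorm _
      _ = ∫⁻ m, ENNReal.ofReal (jb l ^ b) * ‖K l m * g m‖ₑ :=
          (lintegral_const_mul' _ _ ENNReal.ofReal_ne_top).symm
      _ ≤ ∫⁻ m, ENNReal.ofReal D * (p l m * (q l m * G m)) := lintegral_mono (hker' l)
      _ = _ := lintegral_const_mul' _ _ ENNReal.ofReal_ne_top
  rw [hGsq]
  have hsq : ∫⁻ l, ENNReal.ofReal ((jb l ^ b * ‖∫ m : ℝ, K l m * g m‖) ^ 2) ≤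
      ENNReal.ofReal D ^ 2 * (R * ∫⁻ m, G m ^ 2) := by
    refine (lintegral_mono hpt).trans ?_
    rw [lintegral_const_mul' _ _ (by finiteness)]
    gcongr
    exact schur_test p q hpm hqm _ _ hP hQ G hGm
  calc _ ≤ (ENNReal.ofReal D ^ 2 * (R * ∫⁻ m, G m ^ 2)) ^ ((1 : ℝ) / 2) := by gcongr
    _ = ENNReal.ofReal D * R ^ ((1 : ℝ) / 2) * (∫⁻ m, G m ^ 2) ^ ((1 : ℝ) / 2) := by
      rw [ENNReal.mul_rpow_of_nonneg _ _ (by norm_num),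
        ENNReal.mul_rpow_of_nonneg _ _ (by norm_num), ← ENNReal.rpow_two, ← ENNReal.rpow_mul,
        mul_assoc]
      norm_num
    _ ≤ _ := by
      have hC : R ^ ((1 : ℝ) / 2) ≤ ENNReal.ofReal ((R ^ ((1 : ℝ) / 2)).toReal + 1) :=
        (ENNReal.le_ofReal_iff_toReal_le hRtop (by positivity)).2 (by linarith)
      rw [mul_assoc _ A, ← hD, ENNReal.ofReal_mul (q := D) (by positivity), mul_comm (ENNReal.ofReal D)]
      gcongr
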